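/- Fix a real number c with 0 ≤ c < 1, and let (u∧, v∧) be the unique solution in D = (3c, ũ) × [8−5c, ∞) of the system ψ_uv(√2−1, u, v) = 0 and ∂ψ_uv/∂t(√2−1, u, v) = 0. Then ψ_uv(t, u∧, v∧) ≥ 0 for all t ∈ [−1,1], and for every pair (u, v) with v > u such that ψ_uv(t, u, v) ≥ 0 for all t ∈ [−1,1], sup over t ∈ [−1,1] of |ψ_uv(t, u, v)| is at least sup over t ∈ [−1,1] of |ψ_uv(t, u∧, v∧)|; i.e., (u∧, v∧) induces the optimal outer quartic G¹ approximant. -/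

import Mathlib

/-- Simplified radial error of the quartic G¹ Bézier approximant of the unit circular arc. -/
noncomputable def psiQ (c t ξ η : ℝ) : ℝ :=
  (t^2 - 1)^2 *
    ((1/64)*(3*η - 4*Real.sqrt (1 - c^2)*ξ - 3*c)^2*t^4
      + (1/64)*(32*c^2*ξ^2 + 32*ξ^2 - 64*c*Real.sqrt (1 - c^2)*ξ
          - 18*η^2 + 36*c*η - 34*c^2 + 16)*t^2
      + (1/64)*((3*η + 4*Real.sqrt (1 - c^2)*ξ + 5*c)^2 - 64))

/-- Sup over `t ∈ [−1,1]` of `|f t|`. -/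
noncomputable def errSup (f : ℝ → ℝ) : ℝ :=
  sSup ((fun t => |f t|) '' Set.Icc (-1 : ℝ) 1)

/-- The quartic G¹ radial error in the variables `u = 3η − 4√(1−c²)ξ`,
`v = 3η + 4√(1−c²)ξ`. -/
noncomputable def psiUV (c t u v : ℝ) : ℝ :=
  psiQ c t ((v - u)/(8*Real.sqrt (1 - c^2))) ((u + v)/6)

noncomputable def kconst : ℝ := 2*Real.sqrt ((2*Real.sqrt 2 - 1)/7)

noncomputable def utilde (c : ℝ) : ℝ := kconst*c^2 - (2*kconst - 3)*c + kconst

noncomputable def gA (c a b : ℝ) : ℝ :=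
  c^2/(1-c^2)*(b-a-8*c)^2 - 2*a*b + 24*a*c - 8*b*c + 48*c^2 + 16

lemma psi_form (c : ℝ) (hc0 : 0 ≤ c) (hc1 : c < 1) (t u v : ℝ) :
    psiUV c t u v = (1/64)*((t^2-1)^2*((u-3*c)^2*t^4 + gA c (u-3*c) (v+5*c)*t^2
      + ((v+5*c)^2-64))) := by
  have h1 : 0 < 1 - c^2 := by nlinarith
  have hs : 0 < Real.sqrt (1-c^2) := Real.sqrt_pos.mpr h1
  have hs2 : Real.sqrt (1-c^2)^2 = 1-c^2 := Real.sq_sqrt h1.le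
  have e1 : Real.sqrt (1-c^2) * ((v - u)/(8*Real.sqrt (1 - c^2))) = (v-u)/8 := by
    field_simp
  have e2 : ((v - u)/(8*Real.sqrt (1 - c^2)))^2 = (v-u)^2/(64*(1-c^2)) := by
    rw [div_pow, mul_pow, hs2]; norm_num
  have e3 : c^2/(1-c^2) = 1/(1-c^2) - 1 := by field_simp; ring
  unfold psiUV psiQ gA
  rw [e3]
  set X := (v - u)/(8*Real.sqrt (1 - c^2)) with hX
  have e4 : X^2 = (v-u)^2/64*(1/(1-c^2)) := by rw [e2]; field_simp
  have e5 : (c^2)*(1/(1-c^2)) = 1/(1-c^2) - 1 := by rw [← e3]; ring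
  generalize 1/(1-c^2) = m at *
  have r1 : 3*((u+v)/6) - 4*Real.sqrt (1-c^2)*X - 3*c = u - 3*c := by linear_combination -4*e1
  have r2 : 3*((u+v)/6) + 4*Real.sqrt (1-c^2)*X + 5*c = v + 5*c := by linear_combination 4*e1
  rw [r1, r2]
  have r3 : 32*c^2*X^2 + 32*X^2 - 64*c*Real.sqrt (1 - c^2)*X
          - 18*((u+v)/6)^2 + 36*c*((u+v)/6) - 34*c^2 + 16 =
      (m - 1)*(v+5*c-(u-3*c)-8*c)^2 - 2*(u-3*c)*(v+5*c) + 24*(u-3*c)*c - 8*(v+5*c)*c + 48*c^2 + 16 := by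
    linear_combination (32*c^2+32)*e4 - 64*c*e1 + (v-u)^2/2*e5
  rw [r3]; ring

set_option maxHeartbeats 1600000 in
lemma key (c A a B b r U W P : ℝ) (hc0 : 0 ≤ c) (hc1 : c < 1) (hr1 : 1.414 < r) (hr2 : r < 1.415)
    (hr : r^2 = 2) (hA : A < 1.03*(1-c)^2) (ha1 : a < A) (ha2 : -A < a) (hb : 8 ≤ b) (hbB : b < B)
    (hBA : B^2 - 64 = (3-2*r)^2*A^2) (hU : U = A^2 - a^2) (hW : W = B^2-b^2)
    (hP : P = gA c a b - gA c A B)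
    (h0 : (3-2*r)^2*U + W ≤ (3-2*r)*P) (h1 : (2-r)*P < (2-r)^2*U+W) : False := by
  have hA0 : 0 < A := by linarith
  have he0 : 0 < 1 - c := by linarith
  obtain ⟨e, he⟩ : ∃ e, e = 1 - c := ⟨_, rfl⟩
  have hce : c = 1 - e := by linarith
  rw [← he] at he0 hA
  have he1 : e ≤ 1 := by linarith
  have he2 : e^2 ≤ e := by nlinarith
  have hAe : A ≤ 1.03*e := by nlinarith
  have hUα : U = (A-a)*(A+a) := by rw [hU]; ring
  have hα : 0 < A - a := by linarith
  have hU0 : 0 < U := by rw [hUα]; apply mul_pos <;> linarith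
  have hUb : U ≤ (A-a)*(2.06*e^2) := by
    rw [hUα]; apply mul_le_mul_of_nonneg_left _ hα.le; linarith
  have hx0 : 0 < 3-2*r := by linarith
  have hx1 : 0 < 2-r := by linarith
  -- W bound
  have hWU : W < (3-2*r)*(2-r)*U := by
    have := mul_le_mul_of_nonneg_left h0 hx1.le
    have h3 := mul_lt_mul_of_pos_left h1 hx0
    have : (2-r-(3-2*r))*W < (2-r-(3-2*r))*((3-2*r)*(2-r)*U) := by linarith
    exact lt_of_mul_lt_mul_left this (by linarith)
  have hPU : P < ((3-2*r)+(2-r))*U := by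
    have : (2-r)*P < (2-r)*(((3-2*r)+(2-r))*U) := by linarith
    exact lt_of_mul_lt_mul_left this hx1.le
  have hPU' : P < 0.77*U := by
    have : ((3-2*r)+(2-r))*U ≤ 0.77*U := mul_le_mul_of_nonneg_right (by linarith) hU0.le
    linarith
  have hWU' : W < 0.11*U := by
    have : (3-2*r)*(2-r) ≤ 0.11 := by nlinarith only [hr, hr1]
    have := mul_le_mul_of_nonneg_right this hU0.le
    linarith
  have hδ : 0 < B - b := by linarith
  have hδU : (B-b)*16 ≤ 0.11*U := by
    have : W = (B-b)*(B+b) := by rw [hW]; ring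
    have h9 : (B-b)*16 ≤ (B-b)*(B+b) := mul_le_mul_of_nonneg_left (by linarith) hδ.le
    linarith
  have t4 : U ≤ (A-a)*e*2.06 := by
    have := mul_le_mul_of_nonneg_left he2 hα.le
    linarith
  have hδα : (B-b) ≤ 0.015*(A-a)*e := by linarith
  -- B bound
  have hB8 : B - 8 ≤ 0.01*e^2 := by
    have h5 : (3-2*r)^2 ≤ 0.04 := by nlinarith only [hr, hr1]
    have h6 : A^2 ≤ (1.03*e)^2 := by gcongr
    have h7 : (3-2*r)^2*A^2 ≤ 0.04*(1.03*e)^2 := by gcongr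
    nlinarith only [h7, hBA, hb, hbB, sq_nonneg (B-8), sq_nonneg e]
  -- m
  have hc2 : 0 < 1 - c^2 := by nlinarith
  obtain ⟨m, hm⟩ : ∃ m, m = c^2/(1-c^2) := ⟨_, rfl⟩
  have hm0 : 0 ≤ m := by rw [hm]; positivity
  have hm1 : m*(e*(1+c)) = c^2 := by
    rw [hm, show e*(1+c) = 1 - c^2 by rw [he]; ring]; field_simp
  have hme : m*e ≤ 1/2 := by
    have : (m*e)*(1+c) ≤ (1/2)*(1+c) := by nlinarith only [hm1, hc0, hc1]
    exact le_of_mul_le_mul_right this (by linarith)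
  have hme0 : 0 ≤ m*e := by positivity
  have hPeq : P = (A-a)*(m*(16*e+(b-8)+(B-8)-a-A) + 24*e-8+2*(B-8))
      - (B-b)*(m*(16*e+(b-8)+(B-8)-a-A) - 2*a - 8*c) := by
    rw [hP]; unfold gA; rw [← hm, he]; ring
  -- lower bound
  have hl : 12*e ≤ 16*(m*e) + 24*e - 8 := by
    have : (12*e)*(1+c) ≤ (16*(m*e) + 24*e - 8)*(1+c) := by
      have : (16*(m*e) + 24*e - 8)*(1+c) = 8*e*(2+c) := by
        rw [he] at hm1 ⊢; linear_combination 16*hm1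
      rw [this]; nlinarith only [he0, hc1, hc0]
    exact le_of_mul_le_mul_right this (by linarith)
  have hmA : m*(a+A) ≤ 1.03*e := by
    have : m*(a+A) ≤ m*(2.06*e*e) := by
      apply mul_le_mul_of_nonneg_left _ hm0; linarith
    have h9 := mul_le_mul_of_nonneg_right hme he0.le
    linarith
  have hmA0 : 0 ≤ m*(a+A) := mul_nonneg hm0 (by linarith)
  have hmB : m*((b-8)+(B-8)) ≤ 0.02 := by
    have : m*((b-8)+(B-8)) ≤ m*(0.02*e) := by
      apply mul_le_mul_of_nonneg_left _ hm0; linarith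
    linarith
  have hmB0 : 0 ≤ m*((b-8)+(B-8)) := mul_nonneg hm0 (by linarith)
  have hM : m*(16*e+(b-8)+(B-8)-a-A) = 16*(m*e) + m*((b-8)+(B-8)) - m*(a+A) := by ring
  rw [hM] at hPeq
  have t1 : (A-a)*(10*e) ≤ (A-a)*(16*(m*e) + m*((b-8)+(B-8)) - m*(a+A) + 24*e-8+2*(B-8)) := by
    apply mul_le_mul_of_nonneg_left _ hα.le; linarith
  have t2 : (B-b)*(16*(m*e) + m*((b-8)+(B-8)) - m*(a+A) - 2*a - 8*c) ≤ (B-b)*12 := by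
    apply mul_le_mul_of_nonneg_left _ hδ.le; linarith
  have t3 : 0 < (A-a)*e := by positivity
  linarith

lemma kconst_lt : kconst < 1.03 := by
  unfold kconst
  have h2 : Real.sqrt 2 < 1.4143 := by
    rw [Real.sqrt_lt' (by norm_num)]; norm_num
  have : Real.sqrt ((2*Real.sqrt 2 - 1)/7) < 0.515 := by
    rw [Real.sqrt_lt' (by norm_num)]; linarith
  linarith

lemma le_errSup (c : ℝ) (hc0 : 0 ≤ c) (hc1 : c < 1) (u v t : ℝ) (ht : t ∈ Set.Icc (-1:ℝ) 1) :
    psiUV c t u v ≤ errSup (fun t => psiUV c t u v) := by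
  refine (le_abs_self _).trans (le_csSup ?_ ⟨t, ht, rfl⟩)
  apply IsCompact.bddAbove
  apply isCompact_Icc.image
  simp only [psi_form c hc0 hc1]
  fun_prop

set_option maxHeartbeats 1600000 in
theorem stmt_19 (c : ℝ) (hc0 : 0 ≤ c) (hc1 : c < 1)
    (uh vh : ℝ)
    (hmem : (uh, vh) ∈ Set.Ioo (3*c) (utilde c) ×ˢ Set.Ici (8 - 5*c))
    (hsys0 : psiUV c (Real.sqrt 2 - 1) uh vh = 0)
    (hsys1 : deriv (fun t => psiUV c t uh vh) (Real.sqrt 2 - 1) = 0)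
    (huniq : ∀ p : ℝ × ℝ, p ∈ Set.Ioo (3*c) (utilde c) ×ˢ Set.Ici (8 - 5*c) →
      psiUV c (Real.sqrt 2 - 1) p.1 p.2 = 0 →
      deriv (fun t => psiUV c t p.1 p.2) (Real.sqrt 2 - 1) = 0 → p = (uh, vh)) :
    (∀ t ∈ Set.Icc (-1 : ℝ) 1, 0 ≤ psiUV c t uh vh) ∧
    ∀ u v : ℝ, u < v → (∀ t ∈ Set.Icc (-1 : ℝ) 1, 0 ≤ psiUV c t u v) →
      errSup (fun t => psiUV c t uh vh) ≤ errSup (fun t => psiUV c t u v) := by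
  clear huniq
  obtain ⟨⟨hu1, hu2⟩, hv⟩ := hmem
  simp only [Set.mem_Ici] at hu1 hu2 hv
  have hr : Real.sqrt 2 ^2 = 2 := Real.sq_sqrt (by norm_num)
  have hr1 : 1.414 < Real.sqrt 2 := by
    rw [Real.lt_sqrt (by norm_num)]; norm_num
  have hr2 : Real.sqrt 2 < 1.415 := by
    rw [Real.sqrt_lt' (by norm_num)]; norm_num
  generalize Real.sqrt 2 = r at *
  obtain ⟨A, hAd⟩ : ∃ A, A = uh - 3*c := ⟨_, rfl⟩
  obtain ⟨B, hBd⟩ : ∃ B, B = vh + 5*c := ⟨_, rfl⟩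
  have hA0 : 0 < A := by linarith
  have hAe : A < 1.03*(1-c)^2 := by
    have h1 : uh < kconst*c^2 - (2*kconst-3)*c + kconst := hu2
    have h2 : kconst*(1-c)^2 ≤ 1.03*(1-c)^2 := by
      have := kconst_lt.le; gcongr
    linarith
  have hB : 8 ≤ B := by linarith
  have hform : ∀ t, psiUV c t uh vh = (1/64)*((t^2-1)^2*(A^2*t^4 + gA c A B*t^2 + (B^2-64))) := by
    intro t; rw [psi_form c hc0 hc1, hAd, hBd]
  obtain ⟨τ, hτ⟩ : ∃ τ, τ = r - 1 := ⟨_, rfl⟩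
  have hτ2 : τ^2 = 3 - 2*r := by rw [hτ]; nlinarith
  have hτ0 : 0 < τ := by linarith
  rw [← hτ] at hsys0 hsys1
  have hne : τ^2 - 1 ≠ 0 := by rw [hτ2]; intro h; linarith
  have q0 : A^2*τ^4 + gA c A B*τ^2 + (B^2-64) = 0 := by
    rw [hform] at hsys0
    have : (τ^2-1)^2 ≠ 0 := pow_ne_zero _ hne
    simpa [this] using hsys0
  have q1 : 2*A^2*τ^2 + gA c A B = 0 := by
    have hd : HasDerivAt (fun t : ℝ => (1/64)*((t^2-1)^2*(A^2*t^4 + gA c A B*t^2 + (B^2-64))))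
      ((1/64)*(2*(τ^2-1)*(2*τ)*(A^2*τ^4 + gA c A B*τ^2 + (B^2-64)) + (τ^2-1)^2*(A^2*(4*τ^3)+gA c A B*(2*τ)))) τ := by
      have d2 : HasDerivAt (fun t : ℝ => t^2) (2*τ) τ := by simpa using hasDerivAt_pow 2 τ
      have d4 : HasDerivAt (fun t : ℝ => t^4) (4*τ^3) τ := by simpa using hasDerivAt_pow 4 τ
      have da := (d2.sub_const 1).pow 2
      have db := ((d4.const_mul (A^2)).add (d2.const_mul (gA c A B))).add_const (B^2-64)
      have := (da.mul db).const_mul (1/64)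
      exact HasDerivAt.congr_deriv this (by simp)
    simp only [hform] at hsys1
    rw [hd.deriv, q0] at hsys1
    have h3 : (τ^2-1)^2*(2*τ) ≠ 0 := mul_ne_zero (pow_ne_zero _ hne) (by positivity)
    have h4 : ((τ^2-1)^2*(2*τ))*(2*A^2*τ^2 + gA c A B) = 0 := by linear_combination 64*hsys1
    exact (mul_eq_zero.mp h4).resolve_left h3
  have hG : gA c A B = -2*A^2*(3-2*r) := by rw [← hτ2]; linarith
  have hBA : B^2 - 64 = (3-2*r)^2*A^2 := by
    rw [← hτ2]; linear_combination q0 - τ^2*q1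
  have hform2 : ∀ t, psiUV c t uh vh = (1/64)*A^2*((1-t^2)*(t^2-(3-2*r)))^2 := by
    intro t; rw [hform, hG, hBA]; ring
  refine ⟨fun t _ => by rw [hform2]; positivity, ?_⟩
  intro u v huv hpos
  have hsup : errSup (fun t => psiUV c t uh vh) ≤ (1/64)*A^2*(3-2*r)^2 := by
    apply csSup_le
    · exact ⟨_, 0, by simp, rfl⟩
    · rintro _ ⟨t, ⟨ht1, ht2⟩, rfl⟩
      have ht : t^2 ≤ 1 := by nlinarith only [ht1, ht2]
      have ht0 : 0 ≤ t^2 := sq_nonneg t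
      simp only [hform2]
      rw [abs_of_nonneg (by positivity)]
      apply mul_le_mul_of_nonneg_left _ (by positivity)
      apply sq_le_sq'
      · nlinarith only [mul_nonneg ht0 (sub_nonneg.2 ht), ht, ht0, hr1, hr2, mul_nonneg ht0 (sub_nonneg.2 hr2.le), mul_nonneg ht0 (sub_nonneg.2 hr1.le)]
      · nlinarith only [sq_nonneg (t^2-(2-r)), hr]
  refine hsup.trans ?_
  by_contra hcon
  push Not at hcon
  have hlt : ∀ t ∈ Set.Icc (-1:ℝ) 1, psiUV c t u v < (1/64)*A^2*(3-2*r)^2 :=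
    fun t ht => (le_errSup c hc0 hc1 u v t ht).trans_lt hcon
  obtain ⟨a, had⟩ : ∃ a, a = u - 3*c := ⟨_, rfl⟩
  obtain ⟨b, hbd⟩ : ∃ b, b = v + 5*c := ⟨_, rfl⟩
  simp only [psi_form c hc0 hc1, ← had, ← hbd] at hlt hpos
  have p0 := hpos 0 (by simp)
  have l0 := hlt 0 (by simp)
  have pτ := hpos τ ⟨by linarith, by linarith⟩
  obtain ⟨σ, hσ0, hσ⟩ : ∃ σ : ℝ, 0 ≤ σ ∧ σ^2 = 2 - r :=
    ⟨Real.sqrt (2-r), Real.sqrt_nonneg _, Real.sq_sqrt (by linarith)⟩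
  have lσ := hlt σ ⟨by linarith, by nlinarith only [hσ, hσ0, hr1]⟩
  have b64 : 64 ≤ b^2 := by norm_num at p0; linarith
  have bB : b^2 < B^2 := by norm_num at l0; linarith
  have h0 : 0 ≤ a^2*(3-2*r)^2 + gA c a b*(3-2*r) + (b^2-64) := by
    rw [show τ^4 = (τ^2)^2 by ring, hτ2] at pτ
    have : 0 < (3-2*r-1)^2 := by nlinarith only [hr, hr1]
    have h5 := (mul_nonneg_iff_of_pos_left (by norm_num : (0:ℝ) < 1/64)).1 pτ
    exact (mul_nonneg_iff_of_pos_left this).1 h5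
  have h1 : a^2*(2-r)^2 + gA c a b*(2-r) + (b^2-64) < A^2*(2-r-(3-2*r))^2 := by
    rw [show σ^4 = (σ^2)^2 by ring, hσ] at lσ
    have e : (3-2*r)^2 = (2-r-1)^2*(2-r-(3-2*r))^2 := by
      linear_combination -(3-2*r+(r-1)^2)*hr
    rw [e] at lσ
    have : 0 < (2-r-1)^2 := by nlinarith only [hr, hr2]
    refine lt_of_mul_lt_mul_left ?_ this.le
    linarith
  -- derive bounds on a
  have hW0 : 0 < B^2 - b^2 := by linarith
  have H0 : (3-2*r)^2*(A^2-a^2) + (B^2-b^2) ≤ (3-2*r)*(gA c a b - gA c A B) := by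
    rw [hG]; linarith
  have H1 : (2-r)*(gA c a b - gA c A B) < (2-r)^2*(A^2-a^2) + (B^2-b^2) := by
    rw [hG]; linarith
  have hU : 0 < A^2 - a^2 := by
    have hx0 : 0 < 3-2*r := by linarith
    have hx1 : 0 < 2-r := by linarith
    have i1 := mul_le_mul_of_nonneg_left H0 hx1.le
    have i2 := mul_lt_mul_of_pos_left H1 hx0
    have i3 : 0 < (r-1)*(B^2-b^2) := mul_pos (by linarith) hW0
    have i4 : 0 < ((3-2*r)*(2-r)*(r-1))*(A^2-a^2) := by linarith
    have i5 : 0 ≤ (3-2*r)*(2-r)*(r-1) := by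
      have : 0 ≤ r - 1 := by linarith
      positivity
    exact pos_of_mul_pos_right i4 i5
  have haA := abs_lt_of_sq_lt_sq (show a^2 < A^2 by linarith) hA0.le
  rw [abs_lt] at haA
  have hA2 : A < 1.03 := by nlinarith only [hAe, hc0, hc1]
  have hb8 : 8 ≤ b := by
    by_contra h
    push Not at h
    have : b ≤ -8 := by nlinarith only [b64, h]
    linarith [haA.1]
  have hbB : b < B := lt_of_pow_lt_pow_left₀ 2 (by linarith) bB
  exact key c A a B b r _ _ _ hc0 hc1 hr1 hr2 hr hAe haA.2 haA.1 hb8 hbB hBA rfl rfl rfl H0 H1
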